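/- arXiv:2003.11840 — 2 statements merged into one kernel-verified Lean document; each statement's English description precedes it below -/
import Mathlib

section
/- Let J ⊆ ℝ be an interval containing 0 and let M : J → ℝ be a continuous nonnegative function satisfying M(t) ≤ C₁ + C₂ · M(t)^κ for all t ∈ J, where C₁ > 0, C₂ > 0 and κ > 1 are constants. If M(0) ≤ C₁ and C₁ · C₂^{1/(κ-1)} < (1 − 1/κ) · κ^{-1/(κ-1)}, then M(t) < C₁ / (1 − 1/κ) for all t ∈ J. -/
/-!
A continuous function on a connected set that starts below a value which it never takes stays
below it. Here the value is `a = C₁ / (1 - 1 / κ)`. Since `C₁ = a - a / κ`, the inequality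
`a ≤ C₁ + C₂ * a ^ κ` amounts to `1 / κ ≤ C₂ * a ^ (κ - 1)`, and the smallness condition, raised to
the power `κ - 1`, is exactly the negation of this.
-/

theorem forall_lt_of_isPreconnected_of_forall_ne {X α : Type*} [TopologicalSpace X] [LinearOrder α]
    [TopologicalSpace α] [OrderClosedTopology α] {s : Set X} {f : X → α} {x₀ : X} {a : α}
    (hs : IsPreconnected s) (hf : ContinuousOn f s) (hx₀ : x₀ ∈ s) (hfx₀ : f x₀ ≤ a)
    (hne : ∀ x ∈ s, f x ≠ a) : ∀ x ∈ s, f x < a := by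
  intro x hx
  by_contra! hax
  obtain ⟨y, hy, hya⟩ := hs.intermediate_value hx₀ hx hf ⟨hfx₀, hax⟩
  exact hne y hy hya

theorem mul_rpow_one_div_lt_rpow_one_div_iff {a b c p : ℝ} (ha : 0 ≤ a) (hb : 0 ≤ b) (hc : 0 ≤ c)
    (hp : 0 < p) : a * c ^ (1 / p) < b ^ (1 / p) ↔ c * a ^ p < b := by
  rw [one_div, Real.lt_rpow_inv_iff_of_pos (by positivity) hb hp, Real.mul_rpow ha (by positivity),
    Real.rpow_inv_rpow hc hp.ne', mul_comm]

theorem mul_one_sub_add_mul_rpow_lt_self_iff {a c p θ : ℝ} (ha : 0 < a) :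
    a * (1 - θ) + c * a ^ p < a ↔ c * a ^ (p - 1) < θ := by
  have hpow : a ^ p = a * a ^ (p - 1) := by
    rw [Real.rpow_sub_one ha.ne', mul_div_cancel₀ _ ha.ne']
  calc a * (1 - θ) + c * a ^ p < a
      ↔ a * (c * a ^ (p - 1)) < a * θ := by
        rw [hpow]
        constructor <;> intro h <;> linarith
    _ ↔ c * a ^ (p - 1) < θ := mul_lt_mul_iff_right₀ ha

theorem one_sub_one_div_pos {κ : ℝ} (hκ : 1 < κ) : 0 < 1 - 1 / κ :=
  sub_pos.2 ((div_lt_one (one_pos.trans hκ)).2 hκ)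

theorem add_mul_rpow_lt_div_one_sub_one_div_iff {C₁ C₂ κ : ℝ} (hC₁ : 0 < C₁) (hC₂ : 0 ≤ C₂)
    (hκ : 1 < κ) :
    C₁ + C₂ * (C₁ / (1 - 1 / κ)) ^ κ < C₁ / (1 - 1 / κ) ↔
      C₁ * C₂ ^ (1 / (κ - 1)) < (1 - 1 / κ) * κ ^ (-(1 / (κ - 1))) := by
  have hκ₀ : 0 < κ := one_pos.trans hκ
  have hd : 0 < 1 - 1 / κ := one_sub_one_div_pos hκ
  generalize ha : C₁ / (1 - 1 / κ) = a
  have ha₀ : 0 < a := ha ▸ div_pos hC₁ hd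
  have hC₁a : C₁ = a * (1 - 1 / κ) := (div_eq_iff hd.ne').1 ha
  rw [hC₁a]
  calc a * (1 - 1 / κ) + C₂ * a ^ κ < a
      ↔ C₂ * a ^ (κ - 1) < 1 / κ := mul_one_sub_add_mul_rpow_lt_self_iff ha₀
    _ ↔ a * C₂ ^ (1 / (κ - 1)) < (1 / κ) ^ (1 / (κ - 1)) :=
        (mul_rpow_one_div_lt_rpow_one_div_iff ha₀.le (by positivity) hC₂ (sub_pos.2 hκ)).symm
    _ ↔ a * C₂ ^ (1 / (κ - 1)) < κ ^ (-(1 / (κ - 1))) := by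
        rw [one_div κ, Real.inv_rpow hκ₀.le, Real.rpow_neg hκ₀.le]
    _ ↔ a * (1 - 1 / κ) * C₂ ^ (1 / (κ - 1)) < (1 - 1 / κ) * κ ^ (-(1 / (κ - 1))) := by
        rw [mul_comm a (1 - 1 / κ), mul_assoc, mul_lt_mul_iff_right₀ hd]

theorem strauss_bootstrap_general {X : Type*} [TopologicalSpace X] {s : Set X} {x₀ : X} {M : X → ℝ}
    {C₁ C₂ κ : ℝ} (hs : IsPreconnected s) (hx₀ : x₀ ∈ s) (hC₁ : 0 < C₁) (hC₂ : 0 ≤ C₂) (hκ : 1 < κ)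
    (hcont : ContinuousOn M s) (hineq : ∀ x ∈ s, 0 ≤ M x → M x ≤ C₁ + C₂ * M x ^ κ)
    (hMx₀ : M x₀ ≤ C₁ / (1 - 1 / κ))
    (hsmall : C₁ * C₂ ^ (1 / (κ - 1)) < (1 - 1 / κ) * κ ^ (-(1 / (κ - 1)))) :
    ∀ x ∈ s, M x < C₁ / (1 - 1 / κ) := by
  refine forall_lt_of_isPreconnected_of_forall_ne hs hcont hx₀ hMx₀ fun x hx hMx ↦ ?_
  have hnonneg : 0 ≤ M x := hMx ▸ (div_pos hC₁ (one_sub_one_div_pos hκ)).le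
  have hle := hineq x hx hnonneg
  rw [hMx] at hle
  exact hle.not_gt ((add_mul_rpow_lt_div_one_sub_one_div_iff hC₁ hC₂ hκ).2 hsmall)

/-- Strauss' bootstrap lemma: if a continuous nonnegative `M` on an interval `J ∋ 0` satisfies
`M t ≤ C₁ + C₂ * M t ^ κ`, with `M 0 ≤ C₁` and the smallness condition
`C₁ * C₂^(1/(κ-1)) < (1 - 1/κ) * κ^(-(1/(κ-1)))`, then `M t < C₁ / (1 - 1/κ)` on `J`. -/
theorem strauss_bootstrap (J : Set ℝ) (hJ : J.OrdConnected) (h0 : (0:ℝ) ∈ J)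
    (C₁ C₂ κ : ℝ) (hC₁ : 0 < C₁) (hC₂ : 0 < C₂) (hκ : 1 < κ)
    (M : ℝ → ℝ) (hcont : ContinuousOn M J) (hnonneg : ∀ t ∈ J, 0 ≤ M t)
    (hineq : ∀ t ∈ J, M t ≤ C₁ + C₂ * M t ^ κ)
    (hM0 : M 0 ≤ C₁)
    (hsmall : C₁ * C₂ ^ (1 / (κ - 1)) < (1 - 1 / κ) * κ ^ (-(1 / (κ - 1)))) :
    ∀ t ∈ J, M t < C₁ / (1 - 1 / κ) := by
  have hthreshold : C₁ ≤ C₁ / (1 - 1 / κ) :=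
    le_div_self hC₁.le (one_sub_one_div_pos hκ) (sub_le_self 1 (by positivity))
  exact strauss_bootstrap_general hJ.isPreconnected h0 hC₁ hC₂.le hκ hcont
    (fun t ht _ ↦ hineq t ht) (hM0.trans hthreshold) hsmall
end

section
/- Let J ⊆ ℝ be an interval containing 0, let C₁ > 0 and C₂ > 0, and let M : J → ℝ be a continuous nonnegative function satisfying M(t) ≤ C₁ + C₂ · (M(t)^{3/2} + M(t)²) for all t ∈ J and M(0) ≤ C₁. If C₂ · (2^{3/2} · C₁^{1/2} + 4 C₁) < 1, then M(t) < 2 C₁ for all t ∈ J. -/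
theorem forall_lt_of_forall_le_map_of_map_lt {X α : Type*} [TopologicalSpace X] [LinearOrder α]
    [TopologicalSpace α] [OrderClosedTopology α] {s : Set X} {f : X → α} {Φ : α → α} {c : α}
    (hs : IsPreconnected s) (hf : ContinuousOn f s) (hlt : ∃ x ∈ s, f x < c)
    (hle : ∀ x ∈ s, f x ≤ Φ (f x)) (hΦ : Φ c < c) : ∀ x ∈ s, f x < c := by
  have hne : ∀ x ∈ s, f x ≠ c := by
    rintro x hx rfl
    exact (hle x hx).not_gt hΦ
  exact fun x hx ↦ hs.gt_of_ne hf hne hlt hx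

theorem mul_rpow_three_halves_add_mul_sq {a x : ℝ} (ha : 0 ≤ a) (hx : 0 ≤ x) :
    (a * x) ^ ((3 : ℝ) / 2) + (a * x) ^ 2 =
      x * (a ^ ((3 : ℝ) / 2) * x ^ ((1 : ℝ) / 2) + a ^ 2 * x) := by
  have hx_rpow : x ^ ((3 : ℝ) / 2) = x * x ^ ((1 : ℝ) / 2) := by
    rw [← Real.rpow_one_add' hx (by norm_num)]
    norm_num
  rw [Real.mul_rpow ha hx, hx_rpow]
  ring

theorem add_mul_two_mul_rpow_three_halves_add_sq_lt {C K : ℝ} (hC : 0 < C)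
    (hsmall : K * (2 ^ ((3 : ℝ) / 2) * C ^ ((1 : ℝ) / 2) + 4 * C) < 1) :
    C + K * ((2 * C) ^ ((3 : ℝ) / 2) + (2 * C) ^ 2) < 2 * C :=
  calc C + K * ((2 * C) ^ ((3 : ℝ) / 2) + (2 * C) ^ 2)
      = C + C * (K * (2 ^ ((3 : ℝ) / 2) * C ^ ((1 : ℝ) / 2) + 4 * C)) := by
        rw [mul_rpow_three_halves_add_mul_sq zero_le_two hC.le]
        ring
    _ < C + C * 1 := by gcongr
    _ = 2 * C := by ring

theorem two_power_bootstrap_general {X : Type*} [TopologicalSpace X] {J : Set X}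
    (hJ : IsPreconnected J) {C₁ C₂ : ℝ} (hC₁ : 0 < C₁) {M : X → ℝ} (hcont : ContinuousOn M J)
    (hineq : ∀ x ∈ J, M x ≤ C₁ + C₂ * (M x ^ ((3 : ℝ) / 2) + M x ^ 2))
    (hlt : ∃ x ∈ J, M x < 2 * C₁)
    (hsmall : C₂ * (2 ^ ((3 : ℝ) / 2) * C₁ ^ ((1 : ℝ) / 2) + 4 * C₁) < 1) :
    ∀ x ∈ J, M x < 2 * C₁ :=
  forall_lt_of_forall_le_map_of_map_lt (Φ := fun m ↦ C₁ + C₂ * (m ^ ((3 : ℝ) / 2) + m ^ 2))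
    hJ hcont hlt hineq (add_mul_two_mul_rpow_three_halves_add_sq_lt hC₁ hsmall)

/-- Two-power bootstrap bound: if a continuous nonnegative `M` on an interval `J ∋ 0`
satisfies `M t ≤ C₁ + C₂ (M t^{3/2} + M t²)` with `M 0 ≤ C₁` and
`C₂ (2^{3/2} C₁^{1/2} + 4 C₁) < 1`, then `M t < 2 C₁` on `J`. -/
theorem two_power_bootstrap (J : Set ℝ) (hJ : J.OrdConnected) (h0 : (0:ℝ) ∈ J)
    (C₁ C₂ : ℝ) (hC₁ : 0 < C₁) (hC₂ : 0 < C₂)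
    (M : ℝ → ℝ) (hcont : ContinuousOn M J) (hnonneg : ∀ t ∈ J, 0 ≤ M t)
    (hineq : ∀ t ∈ J, M t ≤ C₁ + C₂ * (M t ^ ((3:ℝ)/2) + M t ^ 2))
    (hM0 : M 0 ≤ C₁)
    (hsmall : C₂ * (2 ^ ((3:ℝ)/2) * C₁ ^ ((1:ℝ)/2) + 4 * C₁) < 1) :
    ∀ t ∈ J, M t < 2 * C₁ :=
  two_power_bootstrap_general hJ.isPreconnected hC₁ hcont hineq ⟨0, h0, by linarith⟩ hsmall
end
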